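/- arXiv:1910.09005 — 8 statements merged into one kernel-verified Lean document; each statement's English description precedes it below -/
import Mathlib

section
/- For every finite rooted tree with nonnegative node weights there exists a node u such that the set of solid edges of the proper heavy path decomposition equals the set of solid edges of the u-exposed heavy path decomposition; that is, a proper heavy path decomposition is always a u-exposed heavy path decomposition for some choice of u. -/
/-!
Take `u` of maximal depth among the nodes whose root path consists of heavy edges only.
Every edge on the path to `u` is then heavy, and away from that path the two decompositions agree
by definition. What remains is an edge from a node `c` off the path to a parent on the path, which
must be light: if the parent is `u`, heaviness of `c` would contradict the maximality of `u`
(`depth_parent_lt`), and otherwise the parent has another heavy child on the path, whereas a node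
has at most one heavy child because the subtrees of siblings are disjoint (`heavy_unique`).
-/

open scoped Classical

/-- A finite rooted tree, given by a root and a parent function:
the root is its own parent, and every node reaches the root by
iterating the parent function. -/
structure ParentTree (V : Type*) [Fintype V] where
  root : V
  parent : V → V
  parent_root : parent root = root
  reaches : ∀ v : V, ∃ n : ℕ, parent^[n] v = root

namespace ParentTree

variable {V : Type*} [Fintype V]

/-- `w(T_x)`: total weight of the subtree rooted at `x`. -/
noncomputable def subtreeWeight (T : ParentTree V) (w : V → ℝ) (x : V) : ℝ :=
  ∑ y ∈ Finset.univ.filter (fun y => ∃ n : ℕ, T.parent^[n] y = x), w y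

/-- The node `c` (equivalently, the edge from `c` to its parent) is *heavy*
if `w(T_{p(c)}) < 2 · w(T_c)`; otherwise it is *light*. -/
def Heavy (T : ParentTree V) (w : V → ℝ) (c : V) : Prop :=
  T.subtreeWeight w (T.parent c) < 2 * T.subtreeWeight w c

/-- Distance from `v` to the root. -/
noncomputable def depth (T : ParentTree V) (v : V) : ℕ := Nat.find (T.reaches v)

/-- The *light depth* `ℓ(v)`: the number of light edges on the root-to-`v` path. -/
noncomputable def lightDepth (T : ParentTree V) (w : V → ℝ) (v : V) : ℕ :=
  ((Finset.range (T.depth v)).filter (fun i => ¬ T.Heavy w (T.parent^[i] v))).card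

/-- The edge from `c` to its parent is solid in the `u`-exposed heavy path
decomposition: either it lies on the root-to-`u` path, or its upper endpoint
is not on that path and the edge is heavy. -/
def ExposedSolid (T : ParentTree V) (w : V → ℝ) (u c : V) : Prop :=
  (∃ n : ℕ, T.parent^[n] u = c) ∨
    ((¬ ∃ n : ℕ, T.parent^[n] u = T.parent c) ∧ T.Heavy w c)

/-- Neighbor relation in the tree. -/
def Adj (T : ParentTree V) (u v : V) : Prop :=
  (u ≠ T.root ∧ T.parent u = v) ∨ (v ≠ T.root ∧ T.parent v = u)

/-- Degree of a node of the tree. -/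
noncomputable def degree (T : ParentTree V) (v : V) : ℕ :=
  (Finset.univ.filter (fun c => c ≠ T.root ∧ T.parent c = v)).card +
    (if v = T.root then 0 else 1)

/-- Distance between two nodes of the tree (length of a shortest walk). -/
noncomputable def tdist (T : ParentTree V) (u v : V) : ℕ :=
  sInf {m : ℕ | ∃ p : ℕ → V, p 0 = u ∧ p m = v ∧ ∀ i < m, T.Adj (p i) (p (i + 1))}

end ParentTree

/-- Induced node weight `w(v) = Σ_{x : b(x) = v} w(x)`. -/
noncomputable def inducedWeight {VG VT : Type*} [Fintype VG]
    (b : VG → VT) (wG : VG → ℝ) (v : VT) : ℝ :=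
  ∑ x ∈ Finset.univ.filter (fun x => b x = v), wG x

namespace ParentTree

lemma depth_parent_lt {V : Type*} [Fintype V] (T : ParentTree V) {c : V} (hc : c ≠ T.root) :
    T.depth (T.parent c) < T.depth c := by
  have h : T.parent^[T.depth c] c = T.root := Nat.find_spec (T.reaches c)
  cases hm : T.depth c with
  | zero => rw [hm] at h; exact absurd h hc
  | succ k =>
    rw [hm, Function.iterate_succ_apply] at h
    exact Nat.lt_succ_of_le (Nat.find_min' (T.reaches (T.parent c)) h)

lemma depth_iterate_le {V : Type*} [Fintype V] (T : ParentTree V) (n : ℕ) (c : V) :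
    T.depth (T.parent^[n] c) ≤ T.depth c := by
  induction n with
  | zero => exact le_rfl
  | succ n ih =>
    rw [Function.iterate_succ_apply']
    by_cases h : T.parent^[n] c = T.root
    · rw [h, T.parent_root, ← h]; exact ih
    · exact (T.depth_parent_lt h).le.trans ih

/-- No node other than the root is a proper ancestor of itself. -/
lemma iterate_parent_ne {V : Type*} [Fintype V] (T : ParentTree V) {c : V} (hc : c ≠ T.root)
    (n : ℕ) : T.parent^[n] (T.parent c) ≠ c := by
  intro h
  have h1 := T.depth_iterate_le n (T.parent c)
  rw [h] at h1
  exact absurd (T.depth_parent_lt hc) (not_lt.mpr h1)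

/-- Two siblings having a common descendant coincide. -/
lemma sibling_eq {V : Type*} [Fintype V] (T : ParentTree V) {c d : V} (hd : d ≠ T.root)
    (hp : T.parent c = T.parent d) {y : V} {a b : ℕ} (hab : a ≤ b)
    (ha : T.parent^[a] y = c) (hb : T.parent^[b] y = d) : c = d := by
  obtain ⟨k, rfl⟩ := Nat.exists_eq_add_of_le' hab
  rw [Function.iterate_add_apply, ha] at hb
  cases k with
  | zero => exact hb
  | succ k =>
    rw [Function.iterate_succ_apply, hp] at hb
    exact absurd hb (T.iterate_parent_ne hd k)

lemma heavy_unique {V : Type*} [Fintype V] (T : ParentTree V) {w : V → ℝ} (hw : ∀ v, 0 ≤ w v)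
    {c d : V} (hc : c ≠ T.root) (hd : d ≠ T.root) (hp : T.parent c = T.parent d)
    (hhc : T.Heavy w c) (hhd : T.Heavy w d) : c = d := by
  by_contra hne
  have hdisj : Disjoint (Finset.univ.filter (fun y => ∃ n : ℕ, T.parent^[n] y = c))
      (Finset.univ.filter (fun y => ∃ n : ℕ, T.parent^[n] y = d)) := by
    rw [Finset.disjoint_filter]
    rintro y - ⟨a, ha⟩ ⟨b, hb⟩
    rcases le_total a b with h | h
    · exact hne (T.sibling_eq hd hp h ha hb)
    · exact hne (T.sibling_eq hc hp.symm h hb ha).symm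
  have key : T.subtreeWeight w c + T.subtreeWeight w d ≤ T.subtreeWeight w (T.parent c) := by
    unfold subtreeWeight
    rw [← Finset.sum_union hdisj]
    refine Finset.sum_le_sum_of_subset_of_nonneg ?_ (fun i _ _ => hw i)
    intro y hy
    simp only [Finset.mem_union, Finset.mem_filter, Finset.mem_univ, true_and] at hy ⊢
    rcases hy with ⟨n, hn⟩ | ⟨n, hn⟩
    · exact ⟨n + 1, by rw [Function.iterate_succ_apply', hn]⟩
    · exact ⟨n + 1, by rw [Function.iterate_succ_apply', hn, hp]⟩
  unfold Heavy at hhc hhd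
  rw [← hp] at hhd
  linarith

end ParentTree

/-- A proper heavy path decomposition is always a `u`-exposed heavy path
decomposition for some choice of `u`: there is a node `u` such that an edge is
heavy (i.e. solid in the proper decomposition) if and only if it is solid in
the `u`-exposed decomposition. -/
theorem proper_is_some_exposed {V : Type*} [Fintype V] (T : ParentTree V)
    (w : V → ℝ) (hw : ∀ v, 0 ≤ w v) :
    ∃ u : V, ∀ c : V, c ≠ T.root → (T.Heavy w c ↔ T.ExposedSolid w u c) := by
  have hroot : ∀ n : ℕ, T.parent^[n] T.root = T.root :=
    fun n => Function.iterate_fixed T.parent_root n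
  obtain ⟨u, hu, hmax⟩ := Finset.exists_max_image
    (Finset.univ.filter fun u => ∀ n : ℕ, T.parent^[n] u ≠ T.root → T.Heavy w (T.parent^[n] u))
    T.depth ⟨T.root, by simp [hroot]⟩
  simp only [Finset.mem_filter, Finset.mem_univ, true_and] at hu hmax
  refine ⟨u, fun c hc => ⟨fun hh => ?_, ?_⟩⟩
  · by_cases hex : ∃ n : ℕ, T.parent^[n] u = T.parent c
    · refine Or.inl ?_
      -- The least index makes the preceding node on the path a genuine (non-root) child.
      have hn := Nat.find_spec hex
      have hmin := fun m => Nat.find_min (m := m) hex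
      cases hk : Nat.find hex with
      | zero =>
        rw [hk] at hn
        have hu' : u = T.parent c := hn
        refine absurd (T.depth_parent_lt hc) (not_lt.mpr ?_)
        rw [← hu']
        refine hmax c fun n hne => ?_
        cases n with
        | zero => exact hh
        | succ n =>
          rw [Function.iterate_succ_apply, ← hu'] at hne ⊢
          exact hu n hne
      | succ k =>
        rw [hk, Function.iterate_succ_apply'] at hn
        have hd : T.parent^[k] u ≠ T.root := by
          intro h
          refine hmin k (by omega) ?_
          rw [← hn, h, T.parent_root]
        exact ⟨k, T.heavy_unique hw hd hc hn (hu k hd) hh⟩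
    · exact Or.inr ⟨hex, hh⟩
  · rintro (⟨n, rfl⟩ | ⟨-, hh⟩)
    · exact hu n hc
    · exact hh
end

section
/- (Dashed depth) In the u-exposed heavy path decomposition of a finite rooted tree with nonnegative node weights, for every node v the dashed depth of v (the number of dashed edges on the root-to-v path) is at most one more than the light depth of v (the number of light edges on the root-to-v path). -/
/-!
A dashed edge `(c, p(c))` is either light, or leaves the root-to-`u` path: `c` is off that path
while `p(c)` is on it. Since the root-to-`u` path is closed under taking parents
(`ParentTree.onPath_iterate`), any upward walk enters it at most once, so at most one edge of the
root-to-`v` path is of the second kind. The light edges account for the light depth.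
-/


open scoped Classical

/-- The set of ancestors of `u` is closed under iterating the parent function; stated for two
points of the upward walk from `v`. -/
theorem ParentTree.onPath_iterate {V : Type*} [Fintype V] (T : ParentTree V) (u v : V) {i j : ℕ}
    (hij : i ≤ j) (h : ∃ n : ℕ, T.parent^[n] u = T.parent^[i] v) :
    ∃ n : ℕ, T.parent^[n] u = T.parent^[j] v := by
  obtain ⟨n, hn⟩ := h
  obtain ⟨k, rfl⟩ := Nat.exists_eq_add_of_le hij
  refine ⟨k + n, ?_⟩
  rw [Function.iterate_add_apply, hn, ← Function.iterate_add_apply, Nat.add_comm]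

/-- (Dashed depth) In the `u`-exposed heavy path decomposition of a finite
rooted tree with nonnegative node weights, for every node `v` the dashed depth
of `v` (the number of dashed edges on the root-to-`v` path) is at most one more
than the light depth of `v`. -/
theorem dashed_depth_le_lightDepth_succ {V : Type*} [Fintype V] (T : ParentTree V)
    (w : V → ℝ) (hw : ∀ v, 0 ≤ w v) (u v : V) :
    ((Finset.range (T.depth v)).filter
        (fun i => ¬ T.ExposedSolid w u (T.parent^[i] v))).card ≤
      T.lightDepth w v + 1 := by
  -- the indices at which the upward walk from `v` enters the root-to-`u` path
  let E : Finset ℕ := (Finset.range (T.depth v)).filter (fun i =>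
    (¬ ∃ n : ℕ, T.parent^[n] u = T.parent^[i] v) ∧ ∃ n : ℕ, T.parent^[n] u = T.parent^[i + 1] v)
  have hE : E.card ≤ 1 := by
    refine Finset.card_le_one.2 fun a ha b hb => ?_
    obtain ⟨-, ha₁, ha₂⟩ := Finset.mem_filter.1 ha
    obtain ⟨-, hb₁, hb₂⟩ := Finset.mem_filter.1 hb
    rcases lt_trichotomy a b with h | h | h
    · exact absurd (T.onPath_iterate u v h ha₂) hb₁
    · exact h
    · exact absurd (T.onPath_iterate u v h hb₂) ha₁
  have hsub : (Finset.range (T.depth v)).filter (fun i => ¬ T.ExposedSolid w u (T.parent^[i] v)) ⊆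
      (Finset.range (T.depth v)).filter (fun i => ¬ T.Heavy w (T.parent^[i] v)) ∪ E := by
    intro i hi
    obtain ⟨hr, hd⟩ := Finset.mem_filter.1 hi
    simp only [ParentTree.ExposedSolid, not_or, not_and] at hd
    rw [Finset.mem_union]
    by_cases hH : T.Heavy w (T.parent^[i] v)
    · refine Or.inr (Finset.mem_filter.2 ⟨hr, hd.1, ?_⟩)
      rw [Function.iterate_succ_apply']
      by_contra hp
      exact hd.2 hp hH
    · exact Or.inl (Finset.mem_filter.2 ⟨hr, hH⟩)
  exact (Finset.card_le_card hsub).trans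
    ((Finset.card_union_le _ _).trans (Nat.add_le_add_left hE _))
end

section
/- For every node v of a finite rooted tree with nonnegative node weights, the symmetric difference between the set of edges marked solid by the proper heavy path decomposition and the set of edges marked solid by the v-exposed heavy path decomposition contains at most 2ℓ(v) + 1 edges, where ℓ(v) is the light depth of v. -/
/-!
The two decompositions can disagree at the edge above `c` in only two ways. Either `c` lies on the
root-to-`v` path and is light; these edges are counted by `ℓ(v)`. Or `c` hangs off the path, is
heavy, and its parent `p` lies on the path. In the second case either `p = v`, or `p` has a child on
the path. Heavy siblings are equal (`heavy_sibling_unique`: otherwise two disjoint subtrees would each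
carry more than half of `w(T_p)`), so the child on the path is light, and `p` determines `c`. Hence
the second kind contributes at most `ℓ(v) + 1` edges.
-/

open scoped Classical

namespace ParentTree

variable {V : Type*} [Fintype V]

lemma iterate_root (T : ParentTree V) (n : ℕ) : T.parent^[n] T.root = T.root :=
  Function.iterate_fixed T.parent_root n

/-- The root is the only node lying on a cycle of the parent function. -/
lemma eq_root_of_iterate_eq (T : ParentTree V) {x : V} {k : ℕ}
    (h : T.parent^[k + 1] x = x) : x = T.root := by
  obtain ⟨m, hm⟩ := T.reaches x
  have h1 : T.parent^[(k + 1) * m] x = x := by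
    rw [Function.iterate_mul]
    exact Function.iterate_fixed h m
  have h2 : (k + 1) * m = k * m + m := by ring
  rw [h2, Function.iterate_add_apply, hm, iterate_root] at h1
  exact h1.symm

/-- Two siblings cannot be ancestors of the same node `y` at different heights: the higher one would
lie on a cycle through their common parent. -/
lemma not_lt_of_siblings (T : ParentTree V) {c d y : V} (hd : d ≠ T.root)
    (hp : T.parent c = T.parent d) {a b : ℕ} (ha : T.parent^[a] y = c)
    (hb : T.parent^[b] y = d) : ¬ a < b := by
  intro hab
  obtain ⟨k, rfl⟩ := Nat.exists_eq_add_of_lt hab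
  have h1 : T.parent^[k + 1] d = d := by
    have hk : a + k + 1 = (k + 1) + a := by omega
    rw [Function.iterate_succ_apply, ← hp, ← Function.iterate_succ_apply, ← ha,
      ← Function.iterate_add_apply, ← hk, hb]
  exact hd (T.eq_root_of_iterate_eq h1)

/-- A node has at most one heavy child. -/
lemma heavy_sibling_unique (T : ParentTree V) {w : V → ℝ} (hw : ∀ x, 0 ≤ w x) {c d : V}
    (hc : c ≠ T.root) (hd : d ≠ T.root) (hp : T.parent c = T.parent d)
    (hhc : T.Heavy w c) (hhd : T.Heavy w d) : c = d := by
  by_contra hne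
  have hdisj : Disjoint (Finset.univ.filter (fun y => ∃ n : ℕ, T.parent^[n] y = c))
      (Finset.univ.filter (fun y => ∃ n : ℕ, T.parent^[n] y = d)) := by
    rw [Finset.disjoint_left]
    intro y hy hy'
    obtain ⟨a, ha⟩ := (Finset.mem_filter.1 hy).2
    obtain ⟨b, hb⟩ := (Finset.mem_filter.1 hy').2
    rcases lt_trichotomy a b with h | h | h
    · exact T.not_lt_of_siblings hd hp ha hb h
    · subst h
      exact hne (ha.symm.trans hb)
    · exact T.not_lt_of_siblings hc hp.symm hb ha h
  have hle : T.subtreeWeight w c + T.subtreeWeight w d ≤ T.subtreeWeight w (T.parent c) := by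
    unfold subtreeWeight
    rw [← Finset.sum_union hdisj]
    refine Finset.sum_le_sum_of_subset_of_nonneg ?_ (fun i _ _ => hw i)
    intro y hy
    rw [Finset.mem_filter]
    refine ⟨Finset.mem_univ _, ?_⟩
    rcases Finset.mem_union.1 hy with h | h
    · obtain ⟨a, ha⟩ := (Finset.mem_filter.1 h).2
      exact ⟨a + 1, by rw [Function.iterate_succ_apply', ha]⟩
    · obtain ⟨a, ha⟩ := (Finset.mem_filter.1 h).2
      exact ⟨a + 1, by rw [Function.iterate_succ_apply', ha, hp]⟩
  unfold Heavy at hhc hhd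
  rw [← hp] at hhd
  linarith

lemma iterate_eq_root_of_depth_le (T : ParentTree V) {v : V} {n : ℕ} (h : T.depth v ≤ n) :
    T.parent^[n] v = T.root := by
  obtain ⟨k, rfl⟩ := Nat.exists_eq_add_of_le' h
  rw [Function.iterate_add_apply, depth, Nat.find_spec (T.reaches v), iterate_root]

/-- The edges solid only in the exposed decomposition are the light edges of the path. -/
lemma card_light_on_path_le (T : ParentTree V) (w : V → ℝ) (v : V) :
    (Finset.univ.filter
      (fun c => c ≠ T.root ∧ (∃ n : ℕ, T.parent^[n] v = c) ∧ ¬ T.Heavy w c)).card ≤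
      T.lightDepth w v := by
  refine le_trans (Finset.card_le_card ?_)
    (Finset.card_image_le (f := fun i => T.parent^[i] v))
  intro c hc
  obtain ⟨hr, ⟨n, rfl⟩, hl⟩ := (Finset.mem_filter.1 hc).2
  refine Finset.mem_image.2 ⟨n, Finset.mem_filter.2 ⟨Finset.mem_range.2 ?_, hl⟩, rfl⟩
  by_contra hn
  exact hr (T.iterate_eq_root_of_depth_le (not_lt.1 hn))

/-- The edges solid only in the proper decomposition: each is charged to the light edge of the
path below its parent, or to `v` itself. -/
lemma card_heavy_off_path_le (T : ParentTree V) {w : V → ℝ} (hw : ∀ x, 0 ≤ w x) (v : V) :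
    (Finset.univ.filter
      (fun c => c ≠ T.root ∧ (¬ ∃ n : ℕ, T.parent^[n] v = c) ∧
        (∃ n : ℕ, T.parent^[n] v = T.parent c) ∧ T.Heavy w c)).card ≤
      T.lightDepth w v + 1 := by
  -- `0` stands for `v`, and `i + 1` for the parent of the light node `T.parent^[i] v`.
  let L := (Finset.range (T.depth v)).filter (fun i => ¬ T.Heavy w (T.parent^[i] v))
  have hcard : (insert 0 (L.image Nat.succ)).card ≤ T.lightDepth w v + 1 :=
    (Finset.card_insert_le _ _).trans (Nat.succ_le_succ Finset.card_image_le)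
  refine le_trans (Finset.card_le_card_of_forall_subsingleton
    (fun c n => T.parent^[n] v = T.parent c) ?_ ?_) hcard
  · intro c hc
    obtain ⟨hr, hoff, hpar, hh⟩ := (Finset.mem_filter.1 hc).2
    -- Minimality puts the index within the depth of `v`, although the root is its own parent.
    obtain ⟨n, hn, hmin⟩ : ∃ n, T.parent^[n] v = T.parent c ∧
        ∀ m < n, T.parent^[m] v ≠ T.parent c :=
      ⟨Nat.find hpar, Nat.find_spec hpar, fun m hm => Nat.find_min hpar hm⟩
    refine ⟨n, ?_, hn⟩
    rcases n with _ | i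
    · exact Finset.mem_insert_self _ _
    have hne : T.parent^[i] v ≠ T.root := by
      intro h
      apply hmin i i.lt_succ_self
      rw [← hn, Function.iterate_succ_apply', h, T.parent_root]
    refine Finset.mem_insert_of_mem (Finset.mem_image.2 ⟨i, Finset.mem_filter.2 ⟨?_, ?_⟩, rfl⟩)
    · rw [Finset.mem_range]
      by_contra h
      exact hne (T.iterate_eq_root_of_depth_le (not_lt.1 h))
    · intro hi
      rw [Function.iterate_succ_apply'] at hn
      exact hoff ⟨i, T.heavy_sibling_unique hw hne hr hn hi hh⟩
  · rintro n - c ⟨hc, hcn⟩ d ⟨hd, hdn⟩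
    obtain ⟨hrc, -, -, hhc⟩ := (Finset.mem_filter.1 hc).2
    obtain ⟨hrd, -, -, hhd⟩ := (Finset.mem_filter.1 hd).2
    exact T.heavy_sibling_unique hw hrc hrd (hcn.symm.trans hdn) hhc hhd

end ParentTree

/-- For every node `v` of a finite rooted tree with nonnegative node weights,
the symmetric difference between the set of edges marked solid by the proper
heavy path decomposition and the set of edges marked solid by the `v`-exposed
heavy path decomposition contains at most `2ℓ(v) + 1` edges. -/
theorem symmDiff_proper_exposed_card_le {V : Type*} [Fintype V] (T : ParentTree V)
    (w : V → ℝ) (hw : ∀ x, 0 ≤ w x) (v : V) :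
    (Finset.univ.filter
        (fun c => c ≠ T.root ∧ ¬ (T.Heavy w c ↔ T.ExposedSolid w v c))).card ≤
      2 * T.lightDepth w v + 1 := by
  refine le_trans (Finset.card_le_card (t :=
    Finset.univ.filter
      (fun c => c ≠ T.root ∧ (∃ n : ℕ, T.parent^[n] v = c) ∧ ¬ T.Heavy w c) ∪
    Finset.univ.filter
      (fun c => c ≠ T.root ∧ (¬ ∃ n : ℕ, T.parent^[n] v = c) ∧
        (∃ n : ℕ, T.parent^[n] v = T.parent c) ∧ T.Heavy w c)) ?_)
    ((Finset.card_union_le _ _).trans ?_)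
  · intro c hc
    have h := (Finset.mem_filter.1 hc).2
    simp only [Finset.mem_union, Finset.mem_filter, Finset.mem_univ, true_and]
    unfold ParentTree.ExposedSolid at h
    tauto
  · have h1 := T.card_light_on_path_le w v
    have h2 := T.card_heavy_off_path_le hw v
    omega
end

section
/- Let v be a node of a finite rooted tree with nonnegative node weights such that w(T_v) > 0, and let v₁, …, v_ℓ be exactly those nodes on the path from v to the root r (possibly including v, excluding r) that are light children of their parents, listed so that v_{i+1} is a proper ancestor of v_i. Then Σ_{i=1}^{ℓ} log₂( w(T_{p(v_i)}) / w(T_{v_i}) ) ≤ log₂( w(T_r) / w(T_v) ). (All quantities w(T_{v_i}) are at least w(T_v) > 0, so every logarithm is defined, and every summand is nonnegative.) -/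
/-!
The weight `w(T_x)` can only grow when passing from a node to its parent, because `T_x ⊆ T_{p(x)}`
and the weights are nonnegative (`subtreeWeight_le_parent`). Along the path from `v` to the root
all these weights are therefore positive, and each quotient `w(T_{p(x)}) / w(T_x)` is at least `1`,
so its logarithm is nonnegative. Adding the terms of the heavy edges to the sum thus does not
decrease it, and the sum over all edges of the path telescopes to `log₂ (w(T_r) / w(T_v))`.
-/

open scoped Classical

theorem ParentTree.subtreeWeight_le_parent {V : Type*} [Fintype V] (T : ParentTree V)
    (w : V → ℝ) (hw : ∀ x, 0 ≤ w x) (x : V) :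
    T.subtreeWeight w x ≤ T.subtreeWeight w (T.parent x) := by
  unfold ParentTree.subtreeWeight
  refine Finset.sum_le_sum_of_subset_of_nonneg ?_ (fun y _ _ => hw y)
  intro y hy
  simp only [Finset.mem_filter, Finset.mem_univ, true_and] at hy ⊢
  obtain ⟨n, rfl⟩ := hy
  exact ⟨n + 1, Function.iterate_succ_apply' _ _ _⟩

/-- Telescoping sum over the light edges on the root-to-`v` path: if
`w(T_v) > 0` then `Σ log₂( w(T_{p(vᵢ)}) / w(T_{vᵢ}) ) ≤ log₂( w(T_r) / w(T_v) )`,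
where the `vᵢ = parent^[i](v)`, `i < depth v`, range over exactly the nodes on
the path from `v` to the root (possibly including `v`, excluding the root) that
are light children of their parents. -/
theorem telescoping_light_log_sum {V : Type*} [Fintype V] (T : ParentTree V)
    (w : V → ℝ) (hw : ∀ x, 0 ≤ w x) (v : V) (hv : 0 < T.subtreeWeight w v) :
    ∑ i ∈ (Finset.range (T.depth v)).filter
        (fun i => ¬ T.Heavy w (T.parent^[i] v)),
        Real.logb 2 (T.subtreeWeight w (T.parent^[i + 1] v) /
          T.subtreeWeight w (T.parent^[i] v)) ≤
      Real.logb 2 (T.subtreeWeight w T.root / T.subtreeWeight w v) := by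
  set f : ℕ → ℝ := fun i => T.subtreeWeight w (T.parent^[i] v) with hf
  have hstep : ∀ i, f i ≤ f (i + 1) := fun i => by
    simp only [hf, Function.iterate_succ_apply']
    exact T.subtreeWeight_le_parent w hw _
  have hpos : ∀ i, 0 < f i := fun i => hv.trans_le (monotone_nat_of_le_succ hstep (Nat.zero_le i))
  have hroot : T.parent^[T.depth v] v = T.root := Nat.find_spec (T.reaches v)
  calc _ ≤ ∑ i ∈ Finset.range (T.depth v), Real.logb 2 (f (i + 1) / f i) := by
        refine Finset.sum_le_sum_of_subset_of_nonneg (Finset.filter_subset _ _) fun i _ _ => ?_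
        exact Real.logb_nonneg one_lt_two ((one_le_div (hpos i)).2 (hstep i))
    _ = ∑ i ∈ Finset.range (T.depth v), (Real.logb 2 (f (i + 1)) - Real.logb 2 (f i)) :=
        Finset.sum_congr rfl fun i _ => Real.logb_div (hpos _).ne' (hpos _).ne'
    _ = Real.logb 2 (f (T.depth v)) - Real.logb 2 (f 0) :=
        Finset.sum_range_sub (fun i => Real.logb 2 (f i)) _
    _ = Real.logb 2 (f (T.depth v) / f 0) := (Real.logb_div (hpos _).ne' (hpos _).ne').symm
    _ = _ := by simp only [hf, hroot, Function.iterate_zero, id_eq]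
end

section
/- Let (T, 𝓑) be a rooted tree decomposition of a connected graph G with positive vertex weights, satisfying conditions (R1) with adhesion bound a_max and (R3). Then every path in T consisting of 2·a_max + 2 nodes, each of degree 2 in T, contains a node v whose induced node weight satisfies w(v) > 0. -/
/-!
Suppose every node of the path has zero induced weight, so that no vertex `x` has its topmost node
`b x` on the path. If `x` lies in the bag of a path node `v`, then the tree path from `v` to `b x`
must leave `v` through its parent (`step_parent_of_depth_le`), because a simple path that starts
downwards keeps going down (`down_of_down`) and would end at a node deeper than `v`. By (T2), this
gives `𝓑 v ⊆ 𝓑 (parent v)`, and (R1) then bounds the size of `𝓑 v` by `amax`. The root cannot lie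
on the path: its bag is nonempty and each of its vertices has the root as topmost node.

By (R3), bags shrink strictly along each downward edge of the path. The path first goes up and then
down, so its first or its last `amax + 2` nodes form a monotone chain. The bag sizes along this
chain are strictly monotone and at most `amax`, which is impossible.
-/


open scoped Classical

namespace ParentTree

variable {V : Type*} [Fintype V]

lemma depth_root (T : ParentTree V) : T.depth T.root = 0 := by
  simp [depth]

lemma depth_eq_zero (T : ParentTree V) {v : V} (h : T.depth v = 0) : v = T.root := by
  simpa [depth] using h

lemma depth_of_ne_root (T : ParentTree V) {c : V} (hc : c ≠ T.root) :
    T.depth c = T.depth (T.parent c) + 1 := by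
  unfold depth
  exact Nat.find_comp_succ (T.reaches c) (T.reaches (T.parent c)) (by simpa using hc)

/-- The tree as a simple graph, which gives access to simple paths between nodes. -/
def toGraph (T : ParentTree V) : SimpleGraph V where
  Adj := T.Adj
  symm := ⟨fun _ _ h => Or.symm h⟩
  loopless := ⟨fun v h => by
    have h' : v ≠ T.root ∧ T.parent v = v := by
      rcases h with h | h <;> exact h
    have := T.depth_of_ne_root h'.1
    rw [h'.2] at this
    omega⟩

lemma reachable_root (T : ParentTree V) (v : V) : T.toGraph.Reachable v T.root := by
  obtain ⟨n, hn⟩ := T.reaches v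
  induction n generalizing v with
  | zero => rw [Function.iterate_zero_apply] at hn; rw [hn]
  | succ n ih =>
    by_cases hv : v = T.root
    · rw [hv]
    · have h : T.toGraph.Adj v (T.parent v) := Or.inl ⟨hv, rfl⟩
      exact h.reachable.trans (ih _ hn)

/-- A simple path that takes a downward step only takes downward steps afterwards: an upward step
right after a downward one would return to the same parent. -/
lemma down_of_down (T : ParentTree V) {m : ℕ} {p : ℕ → V}
    (hadj : ∀ i, i < m → T.Adj (p i) (p (i + 1)))
    (hinj : ∀ i j, i ≤ m → j ≤ m → p i = p j → i = j)
    {s : ℕ} (hs : p (s + 1) ≠ T.root ∧ T.parent (p (s + 1)) = p s)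
    (i : ℕ) (hsi : s ≤ i) (him : i < m) :
    p (i + 1) ≠ T.root ∧ T.parent (p (i + 1)) = p i := by
  induction i, hsi using Nat.le_induction with
  | base => exact hs
  | succ i hi ih =>
    rcases hadj (i + 1) him with h | h
    · have := hinj i (i + 2) (by omega) (by omega) ((ih (by omega)).2.symm.trans h.2)
      omega
    · exact h

/-- The simple path from `v` to a different node that is no deeper starts with the step from `v`
to its parent. -/
lemma step_parent_of_depth_le (T : ParentTree V) {m : ℕ} {p : ℕ → V} (hm : 0 < m)
    (hadj : ∀ i, i < m → T.Adj (p i) (p (i + 1)))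
    (hinj : ∀ i j, i ≤ m → j ≤ m → p i = p j → i = j)
    (hd : T.depth (p m) ≤ T.depth (p 0)) : p 1 = T.parent (p 0) := by
  rcases hadj 0 hm with h | h
  · exact h.2.symm
  · exfalso
    have hdown := T.down_of_down hadj hinj h
    have key : ∀ i, i ≤ m → T.depth (p i) = T.depth (p 0) + i := by
      intro i
      induction i with
      | zero => simp
      | succ i ih =>
        intro hi
        have h1 := hdown i (by omega) (by omega)
        rw [T.depth_of_ne_root h1.1, h1.2, ih (by omega)]
        omega
    have := key m le_rfl
    omega

/-- The (T2) property propagates membership in a bag from `v` to its parent whenever `x` also lies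
in the bag of some other node `u` that is no deeper than `v`. -/
lemma mem_parent {X : Type*} (T : ParentTree V) (𝓑 : V → Set X)
    (hT2 : ∀ (m : ℕ) (p : ℕ → V),
      (∀ i, i < m → T.Adj (p i) (p (i + 1))) →
      (∀ i j, i ≤ m → j ≤ m → p i = p j → i = j) →
      ∀ i, i ≤ m → 𝓑 (p 0) ∩ 𝓑 (p m) ⊆ 𝓑 (p i))
    {x : X} {u v : V} (hv : x ∈ 𝓑 v) (hu : x ∈ 𝓑 u) (huv : u ≠ v)
    (hd : T.depth u ≤ T.depth v) : x ∈ 𝓑 (T.parent v) := by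
  obtain ⟨w, hw⟩ := ((T.reachable_root v).trans (T.reachable_root u).symm).exists_isPath
  have hadj : ∀ i, i < w.length → T.Adj (w.getVert i) (w.getVert (i + 1)) :=
    fun i hi => w.adj_getVert_succ hi
  have hinj : ∀ i j, i ≤ w.length → j ≤ w.length → w.getVert i = w.getVert j → i = j :=
    fun i j hi hj h => hw.getVert_injOn hi hj h
  have hm : 0 < w.length := by
    rw [Nat.pos_iff_ne_zero]
    exact fun h => huv (w.eq_of_length_eq_zero h).symm
  have h1 := T.step_parent_of_depth_le hm hadj hinj (by simpa using hd)
  have h2 := hT2 w.length w.getVert hadj hinj 1 hm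
  rw [h1, w.getVert_zero, w.getVert_length] at h2
  exact h2 ⟨hv, hu⟩

end ParentTree

/-- In a rooted tree decomposition `(T, 𝓑)` of a connected graph `G` with
positive vertex weights, satisfying conditions (R1) (bounded adhesion `amax`)
and (R3), every path in `T` consisting of `2·amax + 2` nodes, each of degree 2
in `T`, contains a node of positive induced node weight. -/
theorem degree_two_path_contains_positive_weight {VG VT : Type*}
    [Fintype VG] [Fintype VT]
    (G : SimpleGraph VG) (hG : G.Connected)
    (T : ParentTree VT) (𝓑 : VT → Set VG)
    (hT1 : ∀ x : VG, ∃ u : VT, x ∈ 𝓑 u)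
    (hT2 : ∀ (m : ℕ) (p : ℕ → VT),
      (∀ i, i < m → T.Adj (p i) (p (i + 1))) →
      (∀ i j, i ≤ m → j ≤ m → p i = p j → i = j) →
      ∀ i, i ≤ m → 𝓑 (p 0) ∩ 𝓑 (p m) ⊆ 𝓑 (p i))
    (hT3 : ∀ x y : VG, G.Adj x y → ∃ u : VT, x ∈ 𝓑 u ∧ y ∈ 𝓑 u)
    (amax : ℕ)
    (hR1 : ∀ u v : VT, T.Adj u v →
      1 ≤ (𝓑 u ∩ 𝓑 v).ncard ∧ (𝓑 u ∩ 𝓑 v).ncard ≤ amax)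
    (hR3 : ∀ u v : VT, T.Adj u v → T.degree u = 2 → T.degree v = 2 → 𝓑 u ≠ 𝓑 v)
    (wG : VG → ℝ) (hwG : ∀ x, 0 < wG x)
    (b : VG → VT)
    (hb : ∀ x : VG, x ∈ 𝓑 (b x) ∧ ∀ u : VT, x ∈ 𝓑 u → T.depth (b x) ≤ T.depth u)
    (p : ℕ → VT)
    (hadj : ∀ i, i + 1 < 2 * amax + 2 → T.Adj (p i) (p (i + 1)))
    (hinj : ∀ i j, i < 2 * amax + 2 → j < 2 * amax + 2 → p i = p j → i = j)
    (hdeg : ∀ i, i < 2 * amax + 2 → T.degree (p i) = 2) :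
    ∃ i, i < 2 * amax + 2 ∧ 0 < inducedWeight b wG (p i) := by
  by_contra! hcon
  have hb_ne : ∀ i, i < 2 * amax + 2 → ∀ x, b x ≠ p i := by
    intro i hi x hx
    refine (hcon i hi).not_gt ?_
    unfold inducedWeight
    exact Finset.sum_pos (fun y _ => hwG y) ⟨x, by simp [hx]⟩
  have hnonempty : ∀ u v, T.Adj u v → (𝓑 u ∩ 𝓑 v).Nonempty := fun u v h =>
    Set.nonempty_of_ncard_ne_zero (by have := (hR1 u v h).1; omega)
  have hbag : ∀ i, i < 2 * amax + 2 → (𝓑 (p i)).Nonempty := by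
    intro i hi
    rcases Nat.eq_zero_or_pos i with rfl | h0
    · exact (hnonempty _ _ (hadj 0 (by omega))).mono Set.inter_subset_left
    · obtain ⟨j, rfl⟩ := Nat.exists_eq_succ_of_ne_zero h0.ne'
      exact (hnonempty _ _ (hadj j hi)).mono Set.inter_subset_right
  have hroot : ∀ i, i < 2 * amax + 2 → p i ≠ T.root := by
    intro i hi h
    obtain ⟨x, hx⟩ := hbag i hi
    have h1 := (hb x).2 _ hx
    rw [h, T.depth_root] at h1
    exact hb_ne i hi x ((T.depth_eq_zero (by omega)).trans h.symm)
  have hsub : ∀ i, i < 2 * amax + 2 → 𝓑 (p i) ⊆ 𝓑 (T.parent (p i)) := fun i hi x hx =>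
    T.mem_parent 𝓑 hT2 hx (hb x).1 (hb_ne i hi x) ((hb x).2 _ hx)
  have hcard : ∀ i, i < 2 * amax + 2 → (𝓑 (p i)).ncard ≤ amax := by
    intro i hi
    have h := (hR1 (p i) (T.parent (p i)) (Or.inl ⟨hroot i hi, rfl⟩)).2
    rwa [Set.inter_eq_left.mpr (hsub i hi)] at h
  have hlt : ∀ i j, i < 2 * amax + 2 → j < 2 * amax + 2 → T.parent (p i) = p j →
      (𝓑 (p i)).ncard < (𝓑 (p j)).ncard := by
    intro i j hi hj hij
    have hs := hsub i hi
    rw [hij] at hs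
    have hne := hR3 (p i) (p j) (Or.inl ⟨hroot i hi, hij⟩) (hdeg i hi) (hdeg j hj)
    exact Set.ncard_lt_ncard (hs.ssubset_of_ne hne) (Set.toFinite _)
  have hadj' : ∀ i, i < 2 * amax + 1 → T.Adj (p i) (p (i + 1)) := fun i hi => hadj i (by omega)
  have hinj' : ∀ i j, i ≤ 2 * amax + 1 → j ≤ 2 * amax + 1 → p i = p j → i = j :=
    fun i j hi hj => hinj i j (by omega) (by omega)
  -- The direction of the middle step decides which half of the path is monotone.
  by_cases hmid : p (amax + 1) ≠ T.root ∧ T.parent (p (amax + 1)) = p amax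
  · have hdown := T.down_of_down hadj' hinj' hmid
    have key : ∀ k, k ≤ amax + 1 → (𝓑 (p (amax + k))).ncard + k ≤ amax := by
      intro k
      induction k with
      | zero => intro _; exact hcard amax (by omega)
      | succ k ih =>
        intro hk
        have h1 := hlt (amax + k + 1) (amax + k) (by omega) (by omega)
          (hdown (amax + k) (by omega) (by omega)).2
        have h2 := ih (by omega)
        rw [← add_assoc amax k 1]
        omega
    have := key (amax + 1) le_rfl
    omega
  · have hup : ∀ i, i ≤ amax → T.parent (p i) = p (i + 1) := by
      intro i hi
      rcases hadj i (by omega) with h | h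
      · exact h.2
      · exact absurd (T.down_of_down hadj' hinj' h amax hi (by omega)) hmid
    have key : ∀ k, k ≤ amax + 1 → k ≤ (𝓑 (p k)).ncard := by
      intro k
      induction k with
      | zero => simp
      | succ k ih =>
        intro hk
        have h1 := hlt k (k + 1) (by omega) (by omega) (hup k (by omega))
        have h2 := ih (by omega)
        omega
    have h1 := key (amax + 1) le_rfl
    have h2 := hcard (amax + 1) (by omega)
    omega
end

section
/- Let (T, 𝓑) be a rooted tree decomposition of a connected graph G with positive vertex weights, with induced node weights w(v), and define heavy/light edges of T with respect to these node weights. For any vertex x of G and any node v of T that is equal to b(x) or an ancestor of b(x), the light depth of v satisfies ℓ(v) ≤ ⌊log₂( w(T_r) / w(x) )⌋. -/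
/-!
Along the path from a node `v` up to the root, subtree weights never decrease (node weights are
nonnegative), and they at least double across every light edge, by the definition of lightness.
Hence `2 ^ ℓ(v) * w(T_v) ≤ w(T_r)` (`two_pow_lightDepth_mul_le`). If `v` is `b(x)` or an ancestor
of it, then `b(x)` lies in `T_v`, so `w(T_v) ≥ w(b(x)) ≥ w(x) > 0`. Dividing by `w(x)` and taking
base-2 logarithms gives the bound, and the floor is free because `ℓ(v)` is an integer.
-/

open scoped Classical

namespace ParentTree

theorem subtreeWeight_le_parent_s14 {V : Type*} [Fintype V] (T : ParentTree V) {w : V → ℝ}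
    (hw : ∀ v, 0 ≤ w v) (c : V) :
    T.subtreeWeight w c ≤ T.subtreeWeight w (T.parent c) := by
  refine Finset.sum_le_sum_of_subset_of_nonneg ?_ fun y _ _ => hw y
  intro y hy
  simp only [Finset.mem_filter, Finset.mem_univ, true_and] at hy ⊢
  obtain ⟨n, rfl⟩ := hy
  exact ⟨n + 1, Function.iterate_succ_apply' _ _ _⟩

/-- Each light edge among the first `k` edges on the way up from `v` doubles the subtree weight. -/
theorem two_pow_card_light_mul_le {V : Type*} [Fintype V] (T : ParentTree V) {w : V → ℝ}
    (hw : ∀ v, 0 ≤ w v) (v : V) (k : ℕ) :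
    2 ^ ((Finset.range k).filter (fun i => ¬ T.Heavy w (T.parent^[i] v))).card *
      T.subtreeWeight w v ≤ T.subtreeWeight w (T.parent^[k] v) := by
  induction k with
  | zero => simp
  | succ k ih =>
    rw [Finset.range_add_one, Finset.filter_insert, Function.iterate_succ_apply']
    split_ifs with h
    · exact ih.trans (T.subtreeWeight_le_parent_s14 hw _)
    · rw [Finset.card_insert_of_notMem (by simp), pow_succ]
      simp only [Heavy, not_lt] at h
      linarith

theorem two_pow_lightDepth_mul_le {V : Type*} [Fintype V] (T : ParentTree V) {w : V → ℝ}
    (hw : ∀ v, 0 ≤ w v) (v : V) :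
    2 ^ T.lightDepth w v * T.subtreeWeight w v ≤ T.subtreeWeight w T.root := by
  have h := T.two_pow_card_light_mul_le hw v (T.depth v)
  have hroot : T.parent^[T.depth v] v = T.root := Nat.find_spec (T.reaches v)
  rwa [hroot] at h

end ParentTree

/-- In a rooted tree decomposition `(T, 𝓑)` of a connected graph `G` with
positive vertex weights and induced node weights, for any vertex `x` of `G`
and any node `v` of `T` that is `b(x)` or an ancestor of `b(x)`, the light
depth of `v` (with respect to the induced node weights) satisfies
`ℓ(v) ≤ ⌊log₂( w(T_r) / w(x) )⌋`. -/
theorem lightDepth_ancestor_le {VG VT : Type*} [Fintype VG] [Fintype VT]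
    (G : SimpleGraph VG) (hG : G.Connected)
    (T : ParentTree VT) (𝓑 : VT → Set VG)
    (hT1 : ∀ x : VG, ∃ u : VT, x ∈ 𝓑 u)
    (hT2 : ∀ (m : ℕ) (p : ℕ → VT),
      (∀ i, i < m → T.Adj (p i) (p (i + 1))) →
      (∀ i j, i ≤ m → j ≤ m → p i = p j → i = j) →
      ∀ i, i ≤ m → 𝓑 (p 0) ∩ 𝓑 (p m) ⊆ 𝓑 (p i))
    (hT3 : ∀ x y : VG, G.Adj x y → ∃ u : VT, x ∈ 𝓑 u ∧ y ∈ 𝓑 u)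
    (wG : VG → ℝ) (hwG : ∀ x, 0 < wG x)
    (b : VG → VT)
    (hb : ∀ x : VG, x ∈ 𝓑 (b x) ∧ ∀ u : VT, x ∈ 𝓑 u → T.depth (b x) ≤ T.depth u)
    (x : VG) (v : VT) (hv : ∃ n : ℕ, T.parent^[n] (b x) = v) :
    T.lightDepth (inducedWeight b wG) v ≤
      ⌊Real.logb 2 (T.subtreeWeight (inducedWeight b wG) T.root / wG x)⌋₊ := by
  have hw : ∀ u, 0 ≤ inducedWeight b wG u := fun u =>
    Finset.sum_nonneg fun y _ => (hwG y).le
  have hbx : wG x ≤ inducedWeight b wG (b x) :=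
    Finset.single_le_sum (f := wG) (fun y _ => (hwG y).le) (by simp)
  have hbv : inducedWeight b wG (b x) ≤ T.subtreeWeight (inducedWeight b wG) v :=
    Finset.single_le_sum (f := inducedWeight b wG) (fun u _ => hw u) (by simpa using hv)
  have hpow : (2 : ℝ) ^ T.lightDepth (inducedWeight b wG) v * wG x ≤
      T.subtreeWeight (inducedWeight b wG) T.root :=
    (mul_le_mul_of_nonneg_left (hbx.trans hbv) (by positivity)).trans
      (T.two_pow_lightDepth_mul_le hw v)
  have hdiv := (le_div_iff₀ (hwG x)).2 hpow
  apply Nat.le_floor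
  rw [Real.le_logb_iff_rpow_le one_lt_two (lt_of_lt_of_le (by positivity) hdiv),
    Real.rpow_natCast]
  exact hdiv
end

section
/- Let (T, 𝓑) be a rooted tree decomposition of a connected graph G with positive vertex weights and induced node weights w(v). If c is a non-root node of T with w(c) = 0, then 𝓑(c) ⊆ 𝓑(p(c)), where p(c) is the parent of c. -/
/-!
A vertex `x ∈ 𝓑 c` has a topmost bag `b x`. Since `w(c)` is a sum of positive weights over the
vertices with `b x = c`, it vanishes only if `b x ≠ c`. As `b x` is no deeper than `c`, it is not
a descendant of `c`, so the simple tree path from `c` to `b x` leaves `c` through its parent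
(`ParentTree.exists_path_through_parent`), and the path condition on bags puts `x` into
`𝓑 (T.parent c)`.

The path climbs from `c` to the least common ancestor of `c` and `b x` and then descends; the
common ancestor is obtained by minimizing first the height above `c`, then the height above
`b x`, and both minimality properties together give simplicity of the path.
-/

open scoped Classical

namespace ParentTree

theorem iterate_parent_root {V : Type*} [Fintype V] (T : ParentTree V) (n : ℕ) :
    T.parent^[n] T.root = T.root :=
  Function.iterate_fixed T.parent_root n

theorem iterate_depth {V : Type*} [Fintype V] (T : ParentTree V) (v : V) :
    T.parent^[T.depth v] v = T.root :=
  Nat.find_spec (T.reaches v)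

/-- A proper descendant of a non-root node is strictly deeper. -/
theorem eq_of_iterate_eq_of_depth_le {V : Type*} [Fintype V] (T : ParentTree V) {u c : V} {j : ℕ}
    (hc : c ≠ T.root) (hj : T.parent^[j] u = c) (hd : T.depth u ≤ T.depth c) : u = c := by
  have hu := T.iterate_depth u
  rcases lt_or_ge (T.depth u) j with h | h
  · exfalso
    apply hc
    rw [← hj, ← Nat.sub_add_cancel h.le, Function.iterate_add_apply, hu, T.iterate_parent_root]
  · have h1 : T.parent^[T.depth u - j] c = T.root := by
      rw [← hj, ← Function.iterate_add_apply, Nat.sub_add_cancel h, hu]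
    have h2 : T.depth c ≤ T.depth u - j := Nat.find_min' (T.reaches c) h1
    have h3 : j = 0 := by omega
    subst h3
    exact hj

/-- If `c` is a non-root node and `u ≠ c` is no deeper than `c`, then some simple path from `c`
to `u` has the parent of `c` as its second node. -/
theorem exists_path_through_parent {V : Type*} [Fintype V] (T : ParentTree V) {u c : V}
    (hc : c ≠ T.root) (huc : u ≠ c) (hd : T.depth u ≤ T.depth c) :
    ∃ (m : ℕ) (p : ℕ → V), (∀ i, i < m → T.Adj (p i) (p (i + 1))) ∧
      (∀ i j, i ≤ m → j ≤ m → p i = p j → i = j) ∧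
      1 ≤ m ∧ p 0 = c ∧ p 1 = T.parent c ∧ p m = u := by
  have hex : ∃ k j, T.parent^[k] c = T.parent^[j] u :=
    ⟨_, _, (T.iterate_depth c).trans (T.iterate_depth u).symm⟩
  obtain ⟨k, hk, hkmin⟩ : ∃ k, (∃ j, T.parent^[k] c = T.parent^[j] u) ∧
      ∀ k' < k, ∀ j, T.parent^[k'] c ≠ T.parent^[j] u :=
    ⟨Nat.find hex, Nat.find_spec hex, fun k' h j e => Nat.find_min hex h ⟨j, e⟩⟩
  obtain ⟨j, hkj, hjmin⟩ : ∃ j, T.parent^[k] c = T.parent^[j] u ∧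
      ∀ j' < j, T.parent^[k] c ≠ T.parent^[j'] u :=
    ⟨Nat.find hk, Nat.find_spec hk, fun j' h => Nat.find_min hk h⟩
  have hk1 : 1 ≤ k := by
    by_contra h
    have h0 : k = 0 := by omega
    subst h0
    exact huc (T.eq_of_iterate_eq_of_depth_le hc hkj.symm hd)
  have hcr : ∀ i < k, T.parent^[i] c ≠ T.root := fun i hi h =>
    hkmin i hi _ (h.trans (T.iterate_depth u).symm)
  have hur : ∀ i < j, T.parent^[i] u ≠ T.root := by
    intro i hi h
    apply hjmin i hi
    rw [hkj, ← Nat.sub_add_cancel hi.le, Function.iterate_add_apply, h, T.iterate_parent_root]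
  -- A repetition while climbing from `c` or from `u` would give a shortcut to the common
  -- ancestor, against the minimality of `k` or `j`.
  have hcc : ∀ i i', i < i' → i' ≤ k → T.parent^[i] c ≠ T.parent^[i'] c := by
    intro i i' h h' e
    apply hkmin (k - i' + i) (by omega) j
    rw [Function.iterate_add_apply, e, ← Function.iterate_add_apply, Nat.sub_add_cancel h', hkj]
  have huu : ∀ i i', i < i' → i' ≤ j → T.parent^[i] u ≠ T.parent^[i'] u := by
    intro i i' h h' e
    apply hjmin (j - i' + i) (by omega)
    rw [Function.iterate_add_apply, e, ← Function.iterate_add_apply, Nat.sub_add_cancel h', hkj]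
  have hcu : ∀ i l, i ≤ k → l < j → T.parent^[i] c ≠ T.parent^[l] u := by
    intro i l hi hl e
    rcases hi.lt_or_eq with h | rfl
    · exact hkmin i h l e
    · exact hjmin l hl e
  refine ⟨k + j, fun i => if i ≤ k then T.parent^[i] c else T.parent^[k + j - i] u,
    ?_, ?_, by omega, by simp, by simp [hk1], ?_⟩
  · intro i hi
    rcases lt_or_ge i k with h | h
    · left
      simp only [h.le, Nat.succ_le_of_lt h, if_true]
      exact ⟨hcr i h, (Function.iterate_succ_apply' _ _ _).symm⟩
    · right
      have h1 : ¬ i + 1 ≤ k := by omega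
      simp only [h1, if_false]
      refine ⟨hur _ (by omega), ?_⟩
      rw [← Function.iterate_succ_apply' T.parent]
      split_ifs with h2
      · have h3 : i = k := by omega
        subst h3
        rw [hkj]
        congr 2
        omega
      · congr 2
        omega
  · intro i i' hi hi' e
    simp only at e
    by_contra hne
    split_ifs at e with h1 h2 h2
    · rcases Nat.lt_or_gt_of_ne hne with h | h
      · exact hcc _ _ h h2 e
      · exact hcc _ _ h h1 e.symm
    · exact hcu _ _ h1 (by omega) e
    · exact hcu _ _ h2 (by omega) e.symm
    · rcases Nat.lt_or_gt_of_ne hne with h | h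
      · exact huu _ _ (by omega) (by omega) e.symm
      · exact huu _ _ (by omega) (by omega) e
  · rcases Nat.eq_zero_or_pos j with rfl | h
    · simpa using hkj
    · have h1 : ¬ k + j ≤ k := by omega
      simp only [h1, if_false, Nat.sub_self, Function.iterate_zero, id]

end ParentTree

/-- In a rooted tree decomposition `(T, 𝓑)` of a connected graph `G` with
positive vertex weights and induced node weights, if `c` is a non-root node of
`T` with induced weight `w(c) = 0`, then `𝓑(c) ⊆ 𝓑(p(c))`. -/
theorem bag_subset_parent_of_weight_zero {VG VT : Type*} [Fintype VG] [Fintype VT]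
    (G : SimpleGraph VG) (hG : G.Connected)
    (T : ParentTree VT) (𝓑 : VT → Set VG)
    (hT1 : ∀ x : VG, ∃ u : VT, x ∈ 𝓑 u)
    (hT2 : ∀ (m : ℕ) (p : ℕ → VT),
      (∀ i, i < m → T.Adj (p i) (p (i + 1))) →
      (∀ i j, i ≤ m → j ≤ m → p i = p j → i = j) →
      ∀ i, i ≤ m → 𝓑 (p 0) ∩ 𝓑 (p m) ⊆ 𝓑 (p i))
    (hT3 : ∀ x y : VG, G.Adj x y → ∃ u : VT, x ∈ 𝓑 u ∧ y ∈ 𝓑 u)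
    (wG : VG → ℝ) (hwG : ∀ x, 0 < wG x)
    (b : VG → VT)
    (hb : ∀ x : VG, x ∈ 𝓑 (b x) ∧ ∀ u : VT, x ∈ 𝓑 u → T.depth (b x) ≤ T.depth u)
    (c : VT) (hc : c ≠ T.root) (hw : inducedWeight b wG c = 0) :
    𝓑 c ⊆ 𝓑 (T.parent c) := by
  intro x hx
  obtain ⟨hbx, hmin⟩ := hb x
  have hne : b x ≠ c := by
    intro h
    have h1 := (Finset.sum_eq_zero_iff_of_nonneg (fun y _ => (hwG y).le)).1 hw x (by simp [h])
    exact (hwG x).ne' h1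
  obtain ⟨m, p, hadj, hinj, hm, h0, h1, hpm⟩ :=
    T.exists_path_through_parent hc hne (hmin c hx)
  have h := hT2 m p hadj hinj 1 hm
  rw [h0, h1, hpm] at h
  exact h ⟨hx, hbx⟩
end

section
/- Let (T, 𝓑) be a tree decomposition of a connected graph G and let x, y be vertices of G such that no bag of T contains both x and y. Then there is a unique shortest path u⋯v in T such that x ∈ 𝓑(u) and y ∈ 𝓑(v); that is, among all pairs of nodes (u, v) with x ∈ 𝓑(u) and y ∈ 𝓑(v), there is a unique pair minimizing the distance between u and v in T. -/
/-! The nodes whose bag contains `x` form a path-convex set `X` of the tree, by the path condition on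
bags, and likewise `Y` for `y`; the two are disjoint because no bag contains both vertices.

A closest pair exists because distances are natural numbers. For uniqueness, let `(u, v)` and
`(u', v')` both be closest, and take the path from `u'` to `u` (inside `X`), a shortest path from
`u` to `v` (by minimality meeting `X` only in `u` and `Y` only in `v`), and the path from `v` to
`v'` (inside `Y`). Their concatenation repeats no node, so it is the unique path of the tree from
`u'` to `v'`, whose length is `dist u' v' = dist u v`. Hence the two outer pieces have length zero
(`SimpleGraph.IsTree.closest_pair_unique`).

To use this, `ParentTree.isTree_toSimpleGraph` and `ParentTree.tdist_eq_dist` identify the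
parent-function tree and its distance with a Mathlib tree and its graph distance.
-/

open scoped Classical

/-- Concatenating two paths that share only their common endpoint gives a path. -/
theorem isPath_append_of_inter {V : Type*} {G : SimpleGraph V} {u v w : V}
    {p : G.Walk u v} {q : G.Walk v w} (hp : p.IsPath) (hq : q.IsPath)
    (h : ∀ a, a ∈ p.support → a ∈ q.support → a = v) : (p.append q).IsPath := by
  have hq' := hq.support_nodup
  rw [← q.cons_tail_support, List.nodup_cons] at hq'
  rw [SimpleGraph.Walk.isPath_def, SimpleGraph.Walk.support_append, List.nodup_append]
  refine ⟨hp.support_nodup, hq'.2, ?_⟩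
  rintro a ha b hb rfl
  have hav := h a ha (List.mem_of_mem_tail hb)
  exact hq'.1 (hav ▸ hb)

/-- Two path-convex disjoint vertex sets of a tree have at most one closest pair. -/
theorem SimpleGraph.IsTree.closest_pair_unique {V : Type*} {G : SimpleGraph V} (hG : G.IsTree)
    {X Y : Set V}
    (hX : ∀ (a b : V) (p : G.Walk a b), p.IsPath → a ∈ X → b ∈ X → ∀ c ∈ p.support, c ∈ X)
    (hY : ∀ (a b : V) (p : G.Walk a b), p.IsPath → a ∈ Y → b ∈ Y → ∀ c ∈ p.support, c ∈ Y)
    (hXY : ∀ a ∈ X, a ∉ Y) {u v u' v' : V} (hu : u ∈ X) (hv : v ∈ Y) (hu' : u' ∈ X) (hv' : v' ∈ Y)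
    (hmin : ∀ a ∈ X, ∀ b ∈ Y, G.dist u v ≤ G.dist a b)
    (hmin' : ∀ a ∈ X, ∀ b ∈ Y, G.dist u' v' ≤ G.dist a b) : u' = u ∧ v' = v := by
  obtain ⟨q, hq⟩ := hG.1.exists_isPath u' u
  obtain ⟨r, hr⟩ := hG.1.exists_isPath v v'
  obtain ⟨s, hs, hsl⟩ := hG.1.exists_path_of_dist u' v'
  obtain ⟨p, hp, hpl⟩ := hG.1.exists_path_of_dist u v
  -- By minimality the path `p` leaves `X` at once and reaches `Y` only at its end.
  have hpX : ∀ c ∈ p.support, c ∈ X → c = u := by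
    intro c hc hcX
    have h1 := hmin c hcX v hv
    have h2 := SimpleGraph.dist_le (p.dropUntil c hc)
    have h3 := congrArg SimpleGraph.Walk.length (p.take_spec hc)
    rw [SimpleGraph.Walk.length_append] at h3
    have h4 : (p.takeUntil c hc).length = 0 := by omega
    exact (SimpleGraph.Walk.eq_of_length_eq_zero h4).symm
  have hpY : ∀ c ∈ p.support, c ∈ Y → c = v := by
    intro c hc hcY
    have h1 := hmin u hu c hcY
    have h2 := SimpleGraph.dist_le (p.takeUntil c hc)
    have h3 := congrArg SimpleGraph.Walk.length (p.take_spec hc)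
    rw [SimpleGraph.Walk.length_append] at h3
    have h4 : (p.dropUntil c hc).length = 0 := by omega
    exact SimpleGraph.Walk.eq_of_length_eq_zero h4
  have hqX := hX u' u q hq hu' hu
  have hrY := hY v v' r hr hv hv'
  have hpr : (p.append r).IsPath :=
    isPath_append_of_inter hp hr fun a ha hb => hpY a ha (hrY a hb)
  have hqpr : (q.append (p.append r)).IsPath := by
    refine isPath_append_of_inter hq hpr fun a ha hb => ?_
    rcases (SimpleGraph.Walk.mem_support_append_iff _ _).1 hb with hb | hb
    · exact hpX a hb (hqX a ha)
    · exact absurd (hrY a hb) (hXY a (hqX a ha))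
  have heq : q.append (p.append r) = s :=
    congrArg Subtype.val ((hG.isAcyclic.subsingleton_path u' v').elim ⟨_, hqpr⟩ ⟨s, hs⟩)
  have hlen := congrArg SimpleGraph.Walk.length heq
  simp only [SimpleGraph.Walk.length_append] at hlen
  have h1 := hmin' u hu v hv
  have h2 : q.length = 0 := by omega
  have h3 : r.length = 0 := by omega
  exact ⟨SimpleGraph.Walk.eq_of_length_eq_zero h2, (SimpleGraph.Walk.eq_of_length_eq_zero h3).symm⟩

namespace ParentTree

variable {V : Type*} [Fintype V] (T : ParentTree V)

theorem eq_root_of_parent_eq {v : V} (h : T.parent v = v) : v = T.root := by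
  obtain ⟨n, hn⟩ := T.reaches v
  rwa [Function.iterate_fixed h] at hn

/-- The simple graph on the nodes whose edges join each non-root node to its parent. -/
def toSimpleGraph : SimpleGraph V where
  Adj := T.Adj
  symm := ⟨fun _ _ h => h.symm⟩
  loopless := ⟨fun _ h => h.elim (fun h => h.1 (T.eq_root_of_parent_eq h.2))
    fun h => h.1 (T.eq_root_of_parent_eq h.2)⟩

theorem reachable_iterate (v : V) (n : ℕ) : T.toSimpleGraph.Reachable v (T.parent^[n] v) := by
  induction n with
  | zero => exact SimpleGraph.Reachable.refl _
  | succ n ih =>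
    rw [Function.iterate_succ_apply']
    by_cases h : T.parent^[n] v = T.root
    · rwa [h, T.parent_root, ← h]
    · exact ih.trans (SimpleGraph.Adj.reachable (Or.inl ⟨h, rfl⟩))

theorem reachable_root_s18 (v : V) : T.toSimpleGraph.Reachable v T.root := by
  obtain ⟨n, hn⟩ := T.reaches v
  exact hn ▸ T.reachable_iterate v n

/-- The graph is connected through the root. Each edge is determined by its lower endpoint, a
non-root node, so there are fewer edges than nodes; a connected graph with that few edges is a
tree. -/
theorem isTree_toSimpleGraph : T.toSimpleGraph.IsTree := by
  have hc : T.toSimpleGraph.Connected :=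
    { preconnected := fun a b => (T.reachable_root_s18 a).trans (T.reachable_root_s18 b).symm
      nonempty := ⟨T.root⟩ }
  refine SimpleGraph.isTree_iff_connected_and_card.2 ⟨hc, ?_⟩
  have h1 := hc.card_vert_le_card_edgeSet_add_one
  let f : {v : V // v ≠ T.root} → T.toSimpleGraph.edgeSet :=
    fun v => ⟨s(v.1, T.parent v.1), Or.inl ⟨v.2, rfl⟩⟩
  have hf : Function.Surjective f := by
    rintro ⟨e, he⟩
    induction e using Sym2.ind with
    | _ a b =>
      rcases he with ⟨ha, hab⟩ | ⟨hb, hba⟩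
      · exact ⟨⟨a, ha⟩, Subtype.ext (by simp [f, hab])⟩
      · exact ⟨⟨b, hb⟩, Subtype.ext (by simp [f, hba, Sym2.eq_swap])⟩
  have h2 := Nat.card_le_card_of_surjective f hf
  have h3 : Nat.card {v : V // v ≠ T.root} + 1 = Nat.card V := by
    have h4 : 0 < Fintype.card V := Fintype.card_pos_iff.2 ⟨T.root⟩
    rw [Nat.card_eq_fintype_card, Nat.card_eq_fintype_card, Fintype.card_subtype_compl,
      Fintype.card_subtype_eq]
    omega
  omega

theorem exists_walk_of_fun (m : ℕ) (p : ℕ → V) (h : ∀ i < m, T.Adj (p i) (p (i + 1))) :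
    ∃ w : T.toSimpleGraph.Walk (p 0) (p m), w.length = m := by
  induction m with
  | zero => exact ⟨SimpleGraph.Walk.nil, rfl⟩
  | succ m ih =>
    obtain ⟨w, hw⟩ := ih fun i hi => h i (by omega)
    have hadj : T.toSimpleGraph.Adj (p m) (p (m + 1)) := h m (by omega)
    exact ⟨w.concat hadj, by rw [SimpleGraph.Walk.length_concat, hw]⟩

theorem tdist_eq_dist (u v : V) : T.tdist u v = T.toSimpleGraph.dist u v := by
  rw [SimpleGraph.dist_eq_sInf, tdist]
  congr 1
  ext m
  constructor
  · rintro ⟨p, rfl, rfl, h⟩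
    exact T.exists_walk_of_fun m p h
  · rintro ⟨w, rfl⟩
    exact ⟨w.getVert, w.getVert_zero, w.getVert_length, fun i hi => w.adj_getVert_succ hi⟩

end ParentTree

/-- Let `(T, 𝓑)` be a tree decomposition of a connected graph `G`, and let
`x, y` be vertices of `G` such that no bag contains both.  Then among all pairs
of nodes `(u, v)` with `x ∈ 𝓑(u)` and `y ∈ 𝓑(v)` there is a unique pair
minimizing the distance between `u` and `v` in `T`. -/
theorem exists_unique_closest_pair {VG VT : Type*} [Fintype VG] [Fintype VT]
    (G : SimpleGraph VG) (hG : G.Connected)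
    (T : ParentTree VT) (𝓑 : VT → Set VG)
    (hT1 : ∀ x : VG, ∃ u : VT, x ∈ 𝓑 u)
    (hT2 : ∀ (m : ℕ) (p : ℕ → VT),
      (∀ i, i < m → T.Adj (p i) (p (i + 1))) →
      (∀ i j, i ≤ m → j ≤ m → p i = p j → i = j) →
      ∀ i, i ≤ m → 𝓑 (p 0) ∩ 𝓑 (p m) ⊆ 𝓑 (p i))
    (hT3 : ∀ x y : VG, G.Adj x y → ∃ u : VT, x ∈ 𝓑 u ∧ y ∈ 𝓑 u)
    (x y : VG) (hxy : ∀ u : VT, ¬ (x ∈ 𝓑 u ∧ y ∈ 𝓑 u)) :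
    ∃! uv : VT × VT, (x ∈ 𝓑 uv.1 ∧ y ∈ 𝓑 uv.2) ∧
      ∀ u' v' : VT, x ∈ 𝓑 u' → y ∈ 𝓑 v' →
        T.tdist uv.1 uv.2 ≤ T.tdist u' v' := by
  have hconv : ∀ z : VG, ∀ (a b : VT) (p : T.toSimpleGraph.Walk a b), p.IsPath →
      a ∈ {t | z ∈ 𝓑 t} → b ∈ {t | z ∈ 𝓑 t} → ∀ c ∈ p.support, c ∈ {t | z ∈ 𝓑 t} := by
    intro z a b p hp ha hb c hc
    obtain ⟨i, rfl, hi⟩ := SimpleGraph.Walk.mem_support_iff_exists_getVert.1 hc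
    refine hT2 p.length p.getVert (fun j hj => p.adj_getVert_succ hj)
      (fun j k hj hk hjk => hp.getVert_injOn hj hk hjk) i hi ⟨?_, ?_⟩
    · rwa [p.getVert_zero]
    · rwa [p.getVert_length]
  obtain ⟨u₀, hu₀⟩ := hT1 x
  obtain ⟨v₀, hv₀⟩ := hT1 y
  obtain ⟨⟨u, v⟩, ⟨hu, hv⟩, hmin⟩ := Set.exists_min_image
    {q : VT × VT | x ∈ 𝓑 q.1 ∧ y ∈ 𝓑 q.2} (fun q => T.tdist q.1 q.2) (Set.toFinite _)
    ⟨(u₀, v₀), hu₀, hv₀⟩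
  refine ⟨(u, v), ⟨⟨hu, hv⟩, fun a b ha hb => hmin (a, b) ⟨ha, hb⟩⟩, ?_⟩
  rintro ⟨u', v'⟩ ⟨⟨hu', hv'⟩, hmin'⟩
  obtain ⟨h1, h2⟩ := T.isTree_toSimpleGraph.closest_pair_unique (hconv x) (hconv y)
    (fun a ha hb => hxy a ⟨ha, hb⟩) hu hv hu' hv'
    (fun a ha b hb => by
      simpa only [T.tdist_eq_dist] using hmin (a, b) ⟨ha, hb⟩)
    (fun a ha b hb => by
      simpa only [T.tdist_eq_dist] using hmin' a b ha hb)
  exact Prod.ext h1 h2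
end
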